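/- For all natural numbers p, q with p < q < 2p − ⌊|p−2|/2⌋ (an inequality of integers), one has f(p,q) = F(p,q). -/

import Mathlib

/-- `mex S` is the least natural number not belonging to `S`. -/
noncomputable def mex (S : Set ℕ) : ℕ := sInf {n : ℕ | n ∉ S}

/-- `h 0 = 0` and `h n = 1` for all `n ≥ 1`. -/
def h : ℕ → ℕ
  | 0 => 0
  | _ + 1 => 1

/-- The nimber of the Circular sprout game `CS₄(𝒫₄ : p,1,q,1)`, defined by strong
recursion: `f p q` is the mex of the set consisting of `h p ^^^ h q` together with all
values `f p' q' ^^^ f (p-1-p') (q-1-q')` for `0 ≤ p' ≤ p-1` and `0 ≤ q' ≤ q-1`. -/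
noncomputable def f (p q : ℕ) : ℕ :=
  mex ({h p ^^^ h q} ∪
    ⋃ (p' : ℕ) (_ : p' < p) (q' : ℕ) (_ : q' < q),
      {f p' q' ^^^ f (p - 1 - p') (q - 1 - q')})
termination_by p
decreasing_by
  · omega
  · omega

/-- `idx p q` is the unique element of `{1,2,3,4,5}` congruent to `p + q` modulo `5`. -/
def idx (p q : ℕ) : ℕ := if (p + q) % 5 = 0 then 5 else (p + q) % 5

/-- `F p q = (4/5)·(p + q − idx p q) + 2·⌊idx p q / 4⌋`. -/
def F (p q : ℕ) : ℕ := 4 * ((p + q - idx p q) / 5) + 2 * (idx p q / 4)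

/-!
Write `s = p + q`. The value `f p q` is `1` on the diagonal and `2 * min (min p q) (sumCap s)` off
it, where `sumCap s` is `⌊2 (s - 1) / 5⌋` corrected at `s = 3`. Off the diagonal `F p q` is
`2 * sumCap s`, except at `s = 3`, where it is `0`; so for `s ≠ 3` it is the value of `f` exactly
when `sumCap s ≤ min p q`.

The closed form follows by induction. A sum of two diagonal positions is `0`, a sum of a diagonal
and an off-diagonal position is odd, and a sum of two off-diagonal positions is twice the nim-sum of
their halves.

* On the diagonal both parts of a split are diagonal or neither is, so `1` is not an option.
* Off the diagonal, `2 * halfNimber p q` is not an option because the halves of two off-diagonal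
  parts add up to less than `halfNimber p q`, unless they are equal, with nim-sum `0`.
* For `p < q` the odd numbers below it come from splitting off a diagonal position: along
  `c ↦ (c, c + (q - p))` the half grows by at most `1` per step, so it takes every value.
* For `p < q` the even numbers `2 * v` below it come, by the same argument along `a ↦ (a, q - 1)`
  and then from `(p - 1, q - 2)`, from splitting off a position of value `0`. This fails only if
  `s = 5 * k + 1` and `v = 2 * k - 1`, where `v = (2 * k - 2) ⊕ 1` with `1` contributed by
  `(1, 2)` or `(2, 1)`.
-/

section NimSum

theorem two_mul_xor_two_mul (a b : ℕ) : (2 * a) ^^^ (2 * b) = 2 * (a ^^^ b) := by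
  simpa only [Nat.shiftLeft_eq, pow_one, Nat.mul_comm _ 2] using
    (Nat.shiftLeft_xor_distrib (a := a) (b := b) (i := 1)).symm

theorem two_mul_xor_one (a : ℕ) : (2 * a) ^^^ 1 = 2 * a + 1 :=
  Nat.xor_one_of_even (even_two_mul a)

theorem xor_le_add (a b : ℕ) : a ^^^ b ≤ a + b := by
  induction a using Nat.strong_induction_on generalizing b with
  | _ a ih =>
    rcases Nat.eq_zero_or_pos a with rfl | ha
    · simp
    · have hdiv : (a ^^^ b) / 2 ≤ a / 2 + b / 2 := by
        rw [Nat.xor_div_two]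
        exact ih (a / 2) (by omega) (b / 2)
      have hmod : (a ^^^ b) % 2 = (a + b) % 2 := Nat.xor_mod_two_eq
      omega

end NimSum

theorem mex_eq_of_notMem_of_forall_lt {S : Set ℕ} {n : ℕ} (hn : n ∉ S) (hlt : ∀ m < n, m ∈ S) :
    mex S = n :=
  IsLeast.csInf_eq ⟨hn, fun m hm => not_lt.1 fun hmn => hm (hlt m hmn)⟩

theorem exists_le_eq_of_forall_succ_le_add_one {φ : ℕ → ℕ} {n v : ℕ} (h0 : φ 0 = 0)
    (hstep : ∀ i, φ (i + 1) ≤ φ i + 1) (hv : v ≤ φ n) : ∃ i ≤ n, φ i = v := by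
  induction n with
  | zero => exact ⟨0, le_rfl, by omega⟩
  | succ n ih =>
    rcases le_or_gt v (φ n) with hle | hgt
    · obtain ⟨i, hi, rfl⟩ := ih hle
      exact ⟨i, by omega, rfl⟩
    · exact ⟨n + 1, le_rfl, by linarith [hstep n]⟩

section SplitSums

/-- The nim-sums `g a b ⊕ g c d` over all ways to write `(p, q) = (a, b) + (c, d)`. A move from
`(p + 1, q + 1)` leads to such a sum, with `g = f`. -/
def splitSums (g : ℕ → ℕ → ℕ) (p q : ℕ) : Set ℕ :=
  {n | ∃ a b c d, a + c = p ∧ b + d = q ∧ g a b ^^^ g c d = n}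

theorem splitSums_congr {g g' : ℕ → ℕ → ℕ} {p : ℕ} (hg : ∀ a ≤ p, ∀ b, g a b = g' a b) (q : ℕ) :
    splitSums g p q = splitSums g' p q := by
  ext n
  simp only [splitSums, Set.mem_ofPred_eq]
  constructor <;> rintro ⟨a, b, c, d, hp, hq, rfl⟩ <;>
    exact ⟨a, b, c, d, hp, hq, by rw [hg a (by omega), hg c (by omega)]⟩

theorem splitSums_swap (g : ℕ → ℕ → ℕ) (p q : ℕ) :
    splitSums (fun a b => g b a) p q = splitSums g q p := by
  ext n
  constructor <;> rintro ⟨a, b, c, d, hp, hq, hn⟩ <;> exact ⟨b, a, d, c, hq, hp, hn⟩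

theorem f_zero_left (q : ℕ) : f 0 q = if q = 0 then 1 else 0 := by
  rw [f]
  cases q <;> apply mex_eq_of_notMem_of_forall_lt <;> simp [h]

theorem f_zero_right (p : ℕ) : f p 0 = if p = 0 then 1 else 0 := by
  rw [f]
  cases p <;> apply mex_eq_of_notMem_of_forall_lt <;> simp [h]

theorem f_succ_succ (p q : ℕ) : f (p + 1) (q + 1) = mex (insert 0 (splitSums f p q)) := by
  rw [f]
  congr 1
  ext n
  simp only [h, Nat.xor_self, Set.singleton_union, Set.mem_insert_iff, Set.mem_iUnion,
    Set.mem_singleton_iff, splitSums, Set.mem_ofPred_eq, Nat.add_sub_cancel]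
  refine or_congr_right ⟨?_, ?_⟩
  · rintro ⟨a, ha, b, hb, rfl⟩
    exact ⟨a, b, p - a, q - b, by omega, by omega, rfl⟩
  · rintro ⟨a, b, c, d, rfl, rfl, rfl⟩
    exact ⟨a, by omega, b, by omega, by simp only [Nat.add_sub_cancel_left]⟩

theorem f_comm (p q : ℕ) : f p q = f q p := by
  induction p using Nat.strong_induction_on generalizing q with
  | _ p ih =>
    rcases p with _ | p
    · rw [f_zero_left, f_zero_right]
    rcases q with _ | q
    · rw [f_zero_left, f_zero_right]
    rw [f_succ_succ, f_succ_succ, splitSums_congr fun a ha => ih a (by omega), splitSums_swap]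

end SplitSums

section SumCap

/-- The bound on half the nimber of an off-diagonal position `(p, q)` that depends only on
`s = p + q`. The value at `s = 3` is corrected because `f 1 2 = 2`. -/
def sumCap (s : ℕ) : ℕ := if s = 3 then 1 else 2 * (s - 1) / 5

theorem sumCap_mono : Monotone sumCap := by
  intro s t hst
  simp only [sumCap]
  split_ifs <;> omega

theorem sumCap_add_two_le (s : ℕ) : sumCap (s + 2) ≤ sumCap s + 1 := by
  simp only [sumCap]
  split_ifs <;> omega

theorem sumCap_pos {s : ℕ} (hs : 3 ≤ s) : 0 < sumCap s := by
  simp only [sumCap]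
  split_ifs <;> omega

theorem sumCap_le_iff {s m : ℕ} (hs : s ≠ 3) : sumCap s ≤ m ↔ 2 * s ≤ 5 * m + 6 := by
  rw [sumCap, if_neg hs]
  omega

-- At `s = t = 3` both sides are `2`.
theorem sumCap_add_sumCap_lt {s t : ℕ} (hs : 0 < s) (ht : 0 < t) (hst : ¬(s = 3 ∧ t = 3)) :
    sumCap s + sumCap t < sumCap (s + t + 2) := by
  simp only [sumCap]
  split_ifs <;> omega

theorem sumCap_two_mul_add_three_le {p : ℕ} (hp : 0 < p) : sumCap (2 * p + 3) ≤ p := by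
  rw [sumCap_le_iff (by omega)]
  omega

-- Only `s = 5 * k + 1` leaves an integer between the two caps.
theorem exists_eq_two_mul_add_one_of_sumCap_lt {s v : ℕ} (hlo : sumCap (s - 3) < v)
    (hhi : v < sumCap s) : ∃ k, v = 2 * k + 1 ∧ sumCap (s - 5) = 2 * k := by
  refine ⟨v / 2, ?_⟩
  simp only [sumCap] at *
  split_ifs at * <;> omega

theorem F_eq_two_mul_sumCap {p q : ℕ} (h0 : 0 < p + q) (h3 : p + q ≠ 3) :
    F p q = 2 * sumCap (p + q) := by
  have hlt : (p + q) % 5 < 5 := Nat.mod_lt _ (by norm_num)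
  rw [F, idx, sumCap, if_neg h3]
  interval_cases hmod : (p + q) % 5 <;> simp only [reduceIte, Nat.reduceEqDiff] <;> omega

end SumCap

section HalfNimber

/-- Half of the nimber of an off-diagonal position `(p, q)`. -/
def halfNimber (p q : ℕ) : ℕ := min (min p q) (sumCap (p + q))

theorem halfNimber_comm (p q : ℕ) : halfNimber p q = halfNimber q p := by
  rw [halfNimber, halfNimber, min_comm p, add_comm p]

@[simp]
theorem halfNimber_zero_left (q : ℕ) : halfNimber 0 q = 0 := by simp [halfNimber]

@[simp]
theorem halfNimber_zero_right (p : ℕ) : halfNimber p 0 = 0 := by simp [halfNimber]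

theorem halfNimber_le_add_one {a b c d : ℕ} (hmin : min c d ≤ min a b + 1)
    (hsum : c + d ≤ a + b + 2) : halfNimber c d ≤ halfNimber a b + 1 := by
  have hcap : sumCap (c + d) ≤ sumCap (a + b) + 1 :=
    (sumCap_mono hsum).trans (sumCap_add_two_le _)
  simpa only [halfNimber, min_add_add_right] using min_le_min hmin hcap

theorem halfNimber_succ_succ_pos {p q : ℕ} (hpq : 0 < p + q) :
    0 < halfNimber (p + 1) (q + 1) := by
  have hcap : 0 < sumCap (p + 1 + (q + 1)) := sumCap_pos (by omega)
  exact lt_min (by omega) hcap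

theorem halfNimber_add_halfNimber_lt {a b c d : ℕ} (hab : a ≠ b) (hcd : c ≠ d)
    (hne : halfNimber a b ≠ halfNimber c d) :
    halfNimber a b + halfNimber c d < halfNimber (a + c + 1) (b + d + 1) := by
  have hcap : halfNimber a b + halfNimber c d < sumCap (a + b + (c + d) + 2) := by
    by_cases h3 : a + b = 3 ∧ c + d = 3
    · have h8 : sumCap (a + b + (c + d) + 2) = 2 := by rw [h3.1, h3.2]; rfl
      have hab1 : halfNimber a b ≤ 1 := (min_le_right _ _).trans_eq (by rw [h3.1]; rfl)
      have hcd1 : halfNimber c d ≤ 1 := (min_le_right _ _).trans_eq (by rw [h3.2]; rfl)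
      omega
    · exact (add_le_add (min_le_right _ _) (min_le_right _ _)).trans_lt
        (sumCap_add_sumCap_lt (by omega) (by omega) h3)
  rw [show a + b + (c + d) + 2 = a + c + 1 + (b + d + 1) by ring] at hcap
  have hmin : halfNimber a b + halfNimber c d < min (a + c + 1) (b + d + 1) := by
    simp only [halfNimber]
    omega
  exact lt_min hmin hcap

theorem halfNimber_xor_halfNimber_ne {a b c d : ℕ} (hab : a ≠ b) (hcd : c ≠ d) :
    halfNimber a b ^^^ halfNimber c d ≠ halfNimber (a + c + 1) (b + d + 1) := by
  by_cases heq : halfNimber a b = halfNimber c d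
  · rw [heq, Nat.xor_self]
    exact (halfNimber_succ_succ_pos (by omega)).ne
  · exact ((xor_le_add _ _).trans_lt (halfNimber_add_halfNimber_lt hab hcd heq)).ne

end HalfNimber

section ClosedForm

/-- The closed form of `f`. -/
def closedForm (p q : ℕ) : ℕ := if p = q then 1 else 2 * halfNimber p q

@[simp]
theorem closedForm_self (p : ℕ) : closedForm p p = 1 := if_pos rfl

theorem closedForm_of_ne {p q : ℕ} (hpq : p ≠ q) : closedForm p q = 2 * halfNimber p q :=
  if_neg hpq

theorem closedForm_comm (p q : ℕ) : closedForm p q = closedForm q p := by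
  simp only [closedForm, halfNimber_comm p q, eq_comm]

theorem one_notMem_splitSums_closedForm_self (p : ℕ) : 1 ∉ splitSums closedForm p p := by
  rintro ⟨a, b, c, d, hp, hq, hsum⟩
  by_cases hab : a = b
  · obtain rfl : c = d := by omega
    simp [hab] at hsum
  · have hcd : c ≠ d := by omega
    rw [closedForm_of_ne hab, closedForm_of_ne hcd, two_mul_xor_two_mul] at hsum
    omega

theorem two_mul_halfNimber_notMem_splitSums {p q : ℕ} (hpq : p ≠ q) :
    2 * halfNimber (p + 1) (q + 1) ∉ splitSums closedForm p q := by
  rintro ⟨a, b, c, d, rfl, rfl, hsum⟩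
  by_cases hab : a = b
  · have hcd : c ≠ d := by omega
    rw [hab, closedForm_self, closedForm_of_ne hcd, Nat.xor_comm, two_mul_xor_one] at hsum
    omega
  by_cases hcd : c = d
  · rw [hcd, closedForm_self, closedForm_of_ne hab, two_mul_xor_one] at hsum
    omega
  rw [closedForm_of_ne hab, closedForm_of_ne hcd, two_mul_xor_two_mul] at hsum
  exact halfNimber_xor_halfNimber_ne hab hcd (by omega)

theorem two_mul_add_one_mem_splitSums {p q v : ℕ} (hpq : p < q)
    (hv : v < halfNimber (p + 1) (q + 1)) : 2 * v + 1 ∈ splitSums closedForm p q := by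
  obtain ⟨k, hk, rfl⟩ : ∃ k, 0 < k ∧ q = p + k := ⟨q - p, by omega, by omega⟩
  rw [add_right_comm] at hv
  obtain ⟨c, hc, rfl⟩ := exists_le_eq_of_forall_succ_le_add_one (φ := fun c => halfNimber c (c + k))
    (halfNimber_zero_left _) (fun c => halfNimber_le_add_one (by omega) (by omega)) hv.le
  have hcp : c ≠ p + 1 := by
    rintro rfl
    exact hv.false
  refine ⟨c, c + k, p - c, p - c, by omega, by omega, ?_⟩
  rw [closedForm_self, closedForm_of_ne (by omega), two_mul_xor_one]

theorem two_mul_xor_mem_splitSums {a b c d : ℕ} (hab : a ≠ b) (hcd : c ≠ d) :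
    2 * (halfNimber a b ^^^ halfNimber c d) ∈ splitSums closedForm (a + c) (b + d) :=
  ⟨a, b, c, d, rfl, rfl, by
    rw [closedForm_of_ne hab, closedForm_of_ne hcd, two_mul_xor_two_mul]⟩

theorem add_one_lt_of_lt_halfNimber {p q : ℕ} (hp : 0 < p) (hpq : p < q)
    (hhalf : p < halfNimber (p + 1) (q + 1)) : p + 1 < q := by
  by_contra hq
  obtain rfl : q = p + 1 := by omega
  have hcap : p < sumCap (2 * p + 3) := by
    rw [show 2 * p + 3 = p + 1 + (p + 1 + 1) by ring]
    exact hhalf.trans_le (min_le_right _ _)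
  exact hcap.not_ge (sumCap_two_mul_add_three_le hp)

theorem two_mul_mem_splitSums_of_le_sumCap {p q v : ℕ} (hpq : p < q) (hv0 : 0 < v)
    (hv : v < halfNimber (p + 1) (q + 1)) (hcap : v ≤ sumCap (p + q - 1)) :
    2 * v ∈ splitSums closedForm p q := by
  have hvp : v < p + 1 := hv.trans_le ((min_le_left _ _).trans (min_le_left _ _))
  rcases Nat.lt_succ_iff_lt_or_eq.1 hvp with hlt | rfl
  · have hv' : v ≤ halfNimber (p - 1) q := by
      rw [halfNimber, show p - 1 + q = p + q - 1 by omega]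
      exact le_min (by omega) hcap
    obtain ⟨a, ha, rfl⟩ := exists_le_eq_of_forall_succ_le_add_one
      (φ := fun a => halfNimber a q) (halfNimber_zero_left q)
      (fun a => halfNimber_le_add_one (by omega) (by omega)) hv'
    have hmem := two_mul_xor_mem_splitSums (a := a) (b := q) (c := p - a) (d := 0)
      (by omega) (by omega)
    rwa [halfNimber_zero_right, Nat.xor_zero, add_zero, Nat.add_sub_cancel' (by omega)] at hmem
  · have hq : v + 1 < q := add_one_lt_of_lt_halfNimber hv0 hpq hv
    have hhalf : halfNimber v (q - 1) = v := by
      rw [halfNimber, show v + (q - 1) = v + q - 1 by omega, min_eq_left (by omega : v ≤ q - 1),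
        min_eq_left hcap]
    have hmem := two_mul_xor_mem_splitSums (a := v) (b := q - 1) (c := 0) (d := 1)
      (by omega) (by omega)
    rwa [hhalf, halfNimber_zero_left, Nat.xor_zero, add_zero, Nat.sub_add_cancel (by omega)] at hmem

theorem two_mul_mem_splitSums_of_sumCap_lt {p q v : ℕ} (hpq : p < q)
    (hv : v < halfNimber (p + 1) (q + 1)) (hcap : sumCap (p + q - 1) < v) :
    2 * v ∈ splitSums closedForm p q := by
  have hvp : v < p + 1 := hv.trans_le ((min_le_left _ _).trans (min_le_left _ _))
  obtain ⟨k, rfl, hk⟩ := exists_eq_two_mul_add_one_of_sumCap_lt (s := p + 1 + (q + 1))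
    (by rwa [show p + 1 + (q + 1) - 3 = p + q - 1 by omega]) (hv.trans_le (min_le_right _ _))
  rcases Nat.lt_succ_iff_lt_or_eq.1 hvp with hlt | hpk
  · have hhalf : halfNimber (p - 2) (q - 1) = 2 * k := by
      rw [halfNimber, show p - 2 + (q - 1) = p + 1 + (q + 1) - 5 by omega, hk]
      omega
    have hmem := two_mul_xor_mem_splitSums (a := p - 2) (b := q - 1) (c := 2) (d := 1)
      (by omega) (by omega)
    rwa [hhalf, show halfNimber 2 1 = 1 by decide, two_mul_xor_one,
      Nat.sub_add_cancel (by omega), Nat.sub_add_cancel (by omega)] at hmem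
  · have hq : p + 1 < q := add_one_lt_of_lt_halfNimber (by omega) hpq (by omega)
    have hhalf : halfNimber (p - 1) (q - 2) = 2 * k := by
      rw [halfNimber, show p - 1 + (q - 2) = p + 1 + (q + 1) - 5 by omega, hk]
      omega
    have hmem := two_mul_xor_mem_splitSums (a := p - 1) (b := q - 2) (c := 1) (d := 2)
      (by omega) (by omega)
    rwa [hhalf, show halfNimber 1 2 = 1 by decide, two_mul_xor_one,
      Nat.sub_add_cancel (by omega), Nat.sub_add_cancel (by omega)] at hmem

theorem two_mul_mem_splitSums {p q v : ℕ} (hpq : p < q) (hv0 : 0 < v)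
    (hv : v < halfNimber (p + 1) (q + 1)) : 2 * v ∈ splitSums closedForm p q :=
  (le_or_gt v (sumCap (p + q - 1))).elim (two_mul_mem_splitSums_of_le_sumCap hpq hv0 hv)
    (two_mul_mem_splitSums_of_sumCap_lt hpq hv)

theorem mex_insert_zero_splitSums_self (p : ℕ) :
    mex (insert 0 (splitSums closedForm p p)) = 1 := by
  apply mex_eq_of_notMem_of_forall_lt
  · simp [one_notMem_splitSums_closedForm_self p]
  · simp +contextual

theorem mex_insert_zero_splitSums_of_lt {p q : ℕ} (hpq : p < q) :
    mex (insert 0 (splitSums closedForm p q)) = 2 * halfNimber (p + 1) (q + 1) := by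
  apply mex_eq_of_notMem_of_forall_lt
  · have hpos := halfNimber_succ_succ_pos (p := p) (q := q) (by omega)
    simp [two_mul_halfNimber_notMem_splitSums hpq.ne, hpos.ne']
  · intro m hm
    obtain ⟨v, rfl | rfl⟩ := Nat.even_or_odd' m
    · rcases Nat.eq_zero_or_pos v with rfl | hv
      · exact Set.mem_insert _ _
      · exact Set.mem_insert_of_mem _ (two_mul_mem_splitSums hpq hv (by omega))
    · exact Set.mem_insert_of_mem _ (two_mul_add_one_mem_splitSums hpq (by omega))

theorem f_eq_closedForm (p q : ℕ) : f p q = closedForm p q := by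
  induction p using Nat.strong_induction_on generalizing q with
  | _ p ih =>
    rcases lt_or_ge q p with hqp | hpq
    · rw [f_comm, ih q hqp, closedForm_comm]
    rcases p with _ | p
    · simp [f_zero_left, closedForm, eq_comm]
    obtain ⟨q, rfl⟩ : ∃ r, q = r + 1 := ⟨q - 1, by omega⟩
    rw [f_succ_succ, splitSums_congr fun a ha => ih a (by omega)]
    rcases hpq.eq_or_lt with heq | hlt
    · obtain rfl : p = q := by omega
      rw [mex_insert_zero_splitSums_self, closedForm_self]
    · rw [mex_insert_zero_splitSums_of_lt (by omega), closedForm_of_ne hlt.ne]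

end ClosedForm

theorem stmt6_general (p q : ℕ) :
    f p q = F p q ↔ p ≠ q ∧ s(p, q) ≠ s(1, 2) ∧ 2 * max p q ≤ 3 * min p q + 6 := by
  rw [f_eq_closedForm]
  by_cases hpq : p = q
  · have hF : F q q ≠ 1 := by
      rw [F]
      omega
    simp [hpq, hF.symm]
  by_cases h3 : p + q = 3
  · obtain rfl : q = 3 - p := by omega
    have hp : p ≤ 3 := by omega
    interval_cases p <;> decide
  have hne : s(p, q) ≠ s(1, 2) := by grind
  rw [closedForm_of_ne hpq, F_eq_two_mul_sumCap (by omega) h3, Nat.mul_right_inj two_ne_zero,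
    halfNimber, min_eq_right_iff, sumCap_le_iff h3]
  simp only [hpq, hne, ne_eq, not_false_eq_true, true_and]
  omega

theorem stmt6 (p q : ℕ) (hpq : p < q)
    (hq : (q : ℤ) < 2 * (p : ℤ) - |(p : ℤ) - 2| / 2) :
    f p q = F p q := by
  have hle := le_abs_self ((p : ℤ) - 2)
  exact (stmt6_general p q).2 ⟨hpq.ne, by grind, by omega⟩
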